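/- Let 𝒮₂ be the space of Schwartz–Bruhat functions on ℤ×𝕋×ℝ², fix a sign ε ∈ {+1,−1}, and let ψ₁, ψ₂ ∈ 𝒮₂. Define φ₁, φ₂ : ℤ×𝕋×ℝ² → ℂ by φ₁(k,[x],r,s) := ((r+is)·ψ₂(k,[x],r,s) − ε·i·ψ₁(k,[x],r,s))/(1+s²+r²) and φ₂(k,[x],r,s) := ((r−is)·ψ₁(k,[x],r,s) − ε·i·ψ₂(k,[x],r,s))/(1+s²+r²). Then φ₁, φ₂ ∈ 𝒮₂, and for all (k,[x],r,s): (r+is)·φ₂(k,[x],r,s) + ε·i·φ₁(k,[x],r,s) = ψ₁(k,[x],r,s) and (r−is)·φ₁(k,[x],r,s) + ε·i·φ₂(k,[x],r,s) = ψ₂(k,[x],r,s). In other words, the operator matrix d_𝓡 ± i, where d_𝓡 = [[0, M₁+iM₂],[M₁−iM₂, 0]] acts by multiplication by the first and second real variables, maps 𝒮₂⊕𝒮₂ onto 𝒮₂⊕𝒮₂. -/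

import Mathlib

noncomputable section

open MeasureTheory

/-- The circle ℝ/ℤ. -/
abbrev Torus : Type := AddCircle (1 : ℝ)

/-- Partial derivative in the first real variable. -/
noncomputable def pdr (f : ℝ → ℝ → ℂ) : ℝ → ℝ → ℂ :=
  fun r s => deriv (fun u => f u s) r

/-- Partial derivative in the second real variable. -/
noncomputable def pds (f : ℝ → ℝ → ℂ) : ℝ → ℝ → ℂ :=
  fun r s => deriv (fun u => f r u) s

/-- Iterated mixed partial derivative ∂^α in the two real variables. -/
noncomputable def pdMulti (α : ℕ × ℕ) (f : ℝ → ℝ → ℂ) : ℝ → ℝ → ℂ :=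
  pdr^[α.1] (pds^[α.2] f)

/-- The Schwartz–Bruhat condition for a function F : ℤ×𝕋×ℝ² → ℂ: F is
continuous, smooth in the two real variables, and all seminorms
‖F‖_{N,α} = sup (|k|^N + |r|^N + |s|^N + 1)·|∂^α_{(r,s)}F| are finite. -/
def IsSchwartzBruhat (F : ℤ → Torus → ℝ → ℝ → ℂ) : Prop :=
  (∀ k : ℤ, Continuous fun p : Torus × ℝ × ℝ => F k p.1 p.2.1 p.2.2) ∧
  (∀ (k : ℤ) (v : Torus), ContDiff ℝ (⊤ : ℕ∞) fun p : ℝ × ℝ => F k v p.1 p.2) ∧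
  (∀ (N : ℕ) (α : ℕ × ℕ), ∃ C : ℝ, ∀ (k : ℤ) (v : Torus) (r s : ℝ),
    (|(k : ℝ)| ^ N + |r| ^ N + |s| ^ N + 1) * ‖pdMulti α (F k v) r s‖ ≤ C)

/-- The seminorm ‖F‖_{N,α} of a Schwartz–Bruhat function. -/
noncomputable def SBseminorm (F : ℤ → Torus → ℝ → ℝ → ℂ) (N : ℕ) (α : ℕ × ℕ) : ℝ :=
  ⨆ p : ℤ × Torus × ℝ × ℝ,
    (|(p.1 : ℝ)| ^ N + |p.2.2.1| ^ N + |p.2.2.2| ^ N + 1) *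
      ‖pdMulti α (F p.1 p.2.1) p.2.2.1 p.2.2.2‖

/-- The map Ξ: (ΞF)(k,[x],r,s) = ∫ F(k, [x−kθ], b(r+s+k), t)·e^{−2πits} dt. -/
noncomputable def Xi (θ : ℝ) (b : ℤ) (F : ℤ → Torus → ℝ → ℝ → ℂ) :
    ℤ → Torus → ℝ → ℝ → ℂ :=
  fun k v r s => ∫ t : ℝ,
    F k (v - (((k : ℝ) * θ : ℝ) : Torus)) ((b : ℝ) * (r + s + (k : ℝ))) t *
      Complex.exp (((-(2 * Real.pi * t * s) : ℝ) : ℂ) * Complex.I)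

/-- The map Ξ': (Ξ'F)(k,[x],r,s) = ∫ F(k, [x+kθ], r/b − q − k, q)·e^{2πiqs} dq. -/
noncomputable def Xi' (θ : ℝ) (b : ℤ) (F : ℤ → Torus → ℝ → ℝ → ℂ) :
    ℤ → Torus → ℝ → ℝ → ℂ :=
  fun k v r s => ∫ q : ℝ,
    F k (v + (((k : ℝ) * θ : ℝ) : Torus)) (r / (b : ℝ) - q - (k : ℝ)) q *
      Complex.exp (((2 * Real.pi * q * s : ℝ) : ℂ) * Complex.I)

/-!
The formulas for `φ₁, φ₂` are `(d - εi)(d² + 1)⁻¹` applied to `(ψ₁, ψ₂)`, where `d = d_𝓡`: since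
`d²` is multiplication by `r² + s²` and `(εi)² = -1`, this operator inverts `d + εi`. Its matrix
entries are multiplications by functions of temperate growth, so it remains to see that these
preserve `𝒮₂`. A Schwartz–Bruhat function is a family of Schwartz functions on `ℝ²`, indexed by
`(k, v)`, which stays bounded in the Schwartz space after multiplication by any power of `k`.
Multiplication by a function of temperate growth is a continuous linear operator on Schwartz space,
and such operators preserve boundedness.
-/

open Bornology Function LineDeriv Set
open scoped ContDiff SchwartzMap

section Calculus

lemma fderiv_fderiv_apply_comm {E F : Type*} [NormedAddCommGroup E] [NormedSpace ℝ E]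
    [NormedAddCommGroup F] [NormedSpace ℝ F] {f : E → F} (hf : ContDiff ℝ 2 f) (v w x : E) :
    fderiv ℝ (fun y => fderiv ℝ f y v) x w = fderiv ℝ (fun y => fderiv ℝ f y w) x v := by
  have hf' : DifferentiableAt ℝ (fderiv ℝ f) x :=
    (hf.fderiv_right (m := 1) (by norm_num)).differentiable (by norm_num) x
  have happly (u : E) :
      fderiv ℝ (fun y => fderiv ℝ f y u) x = (fderiv ℝ (fderiv ℝ f) x).flip u := by
    simp [fderiv_clm_apply hf' (differentiableAt_const u)]
  rw [happly, happly]
  exact hf.contDiffAt.isSymmSndFDerivAt (by simp) w v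

lemma norm_iteratedFDeriv_smulRight_le {E F V : Type*} [NormedAddCommGroup E] [NormedSpace ℝ E]
    [NormedAddCommGroup F] [NormedSpace ℝ F] [NormedAddCommGroup V] [NormedSpace ℝ V]
    (l : StrongDual ℝ F) {n : ℕ} {g : E → V} (hg : ContDiff ℝ n g) (x : E) :
    ‖iteratedFDeriv ℝ n (fun y => l.smulRight (g y)) x‖ ≤ ‖l‖ * ‖iteratedFDeriv ℝ n g x‖ := by
  let L := ContinuousLinearMap.smulRightL ℝ F V l
  have hL : ‖L‖ ≤ ‖l‖ := L.opNorm_le_bound (norm_nonneg l) fun v =>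
    (ContinuousLinearMap.norm_smulRight_apply l v).le
  exact (L.norm_iteratedFDeriv_comp_left hg.contDiffAt le_rfl).trans (by gcongr)

lemma norm_iteratedFDeriv_succ_le_add {V : Type*} [NormedAddCommGroup V] [NormedSpace ℝ V]
    {n : ℕ} {g : ℝ × ℝ → V} (hg : ContDiff ℝ (n + 1) g) (p : ℝ × ℝ) :
    ‖iteratedFDeriv ℝ (n + 1) g p‖ ≤
      ‖iteratedFDeriv ℝ n (fun q => fderiv ℝ g q (1, 0)) p‖ +
        ‖iteratedFDeriv ℝ n (fun q => fderiv ℝ g q (0, 1)) p‖ := by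
  set g₁ := fun q => fderiv ℝ g q (1, 0)
  set g₂ := fun q => fderiv ℝ g q (0, 1)
  have hg₁ : ContDiff ℝ n g₁ := (hg.fderiv_right le_rfl).clm_apply contDiff_const
  have hg₂ : ContDiff ℝ n g₂ := (hg.fderiv_right le_rfl).clm_apply contDiff_const
  let fst := ContinuousLinearMap.fst ℝ ℝ ℝ
  let snd := ContinuousLinearMap.snd ℝ ℝ ℝ
  have hsplit : fderiv ℝ g = fun q => fst.smulRight (g₁ q) + snd.smulRight (g₂ q) := by
    ext q <;> simp [fst, snd, g₁, g₂]
  calc ‖iteratedFDeriv ℝ (n + 1) g p‖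
      = ‖iteratedFDeriv ℝ n (fun q => fst.smulRight (g₁ q)) p +
          iteratedFDeriv ℝ n (fun q => snd.smulRight (g₂ q)) p‖ := by
        rw [← norm_iteratedFDeriv_fderiv, hsplit, fun_iteratedFDeriv_add_apply
          (contDiff_const.smulRight hg₁).contDiffAt (contDiff_const.smulRight hg₂).contDiffAt]
    _ ≤ ‖fst‖ * ‖iteratedFDeriv ℝ n g₁ p‖ + ‖snd‖ * ‖iteratedFDeriv ℝ n g₂ p‖ :=
        norm_add_le_of_le (norm_iteratedFDeriv_smulRight_le fst hg₁ p)
          (norm_iteratedFDeriv_smulRight_le snd hg₂ p)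
    _ ≤ ‖iteratedFDeriv ℝ n g₁ p‖ + ‖iteratedFDeriv ℝ n g₂ p‖ :=
        add_le_add
          (mul_le_of_le_one_left (norm_nonneg _) (ContinuousLinearMap.norm_fst_le ℝ ℝ ℝ))
          (mul_le_of_le_one_left (norm_nonneg _) (ContinuousLinearMap.norm_snd_le ℝ ℝ ℝ))

end Calculus

section PartialDerivatives

variable {f : ℝ → ℝ → ℂ}

lemma uncurry_pdr (hf : Differentiable ℝ (uncurry f)) :
    uncurry (pdr f) = fun p => fderiv ℝ (uncurry f) p (1, 0) := by
  funext ⟨r, s⟩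
  exact ((hf (r, s)).hasFDerivAt.comp_hasDerivAt r
    ((hasDerivAt_id r).prodMk (hasDerivAt_const r s))).deriv

lemma uncurry_pds (hf : Differentiable ℝ (uncurry f)) :
    uncurry (pds f) = fun p => fderiv ℝ (uncurry f) p (0, 1) := by
  funext ⟨r, s⟩
  exact ((hf (r, s)).hasFDerivAt.comp_hasDerivAt s
    ((hasDerivAt_const s r).prodMk (hasDerivAt_id s))).deriv

lemma contDiff_uncurry_pdr (hf : ContDiff ℝ ∞ (uncurry f)) : ContDiff ℝ ∞ (uncurry (pdr f)) := by
  rw [uncurry_pdr (hf.differentiable (by simp))]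
  exact (hf.fderiv_right (by simp)).clm_apply contDiff_const

lemma contDiff_uncurry_pds (hf : ContDiff ℝ ∞ (uncurry f)) : ContDiff ℝ ∞ (uncurry (pds f)) := by
  rw [uncurry_pds (hf.differentiable (by simp))]
  exact (hf.fderiv_right (by simp)).clm_apply contDiff_const

lemma pds_pdr_comm (hf : ContDiff ℝ ∞ (uncurry f)) : pds (pdr f) = pdr (pds f) := by
  have hdiff : Differentiable ℝ (uncurry f) := hf.differentiable (by simp)
  apply uncurry_injective
  rw [uncurry_pds ((contDiff_uncurry_pdr hf).differentiable (by simp)),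
    uncurry_pdr ((contDiff_uncurry_pds hf).differentiable (by simp)),
    uncurry_pdr hdiff, uncurry_pds hdiff]
  funext p
  exact fderiv_fderiv_apply_comm (contDiff_infty.1 hf 2) _ _ p

lemma iterate_pds_pdr_comm (hf : ContDiff ℝ ∞ (uncurry f)) (n : ℕ) :
    pds^[n] (pdr f) = pdr (pds^[n] f) := by
  induction n generalizing f with
  | zero => rfl
  | succ n ih => simp only [iterate_succ_apply, pds_pdr_comm hf, ih (contDiff_uncurry_pds hf)]

lemma pdMulti_pdr (hf : ContDiff ℝ ∞ (uncurry f)) (α : ℕ × ℕ) :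
    pdMulti α (pdr f) = pdMulti (α.1 + 1, α.2) f := by
  simp only [pdMulti, iterate_pds_pdr_comm hf, iterate_succ_apply]

lemma pdMulti_pds (α : ℕ × ℕ) : pdMulti α (pds f) = pdMulti (α.1, α.2 + 1) f := rfl

end PartialDerivatives

section SchwartzMap

/-- The operator `∂^α` on Schwartz functions of two real variables, the counterpart of `pdMulti`
as a continuous linear map. -/
def pdMultiCLM (α : ℕ × ℕ) : 𝓢(ℝ × ℝ, ℂ) →L[ℝ] 𝓢(ℝ × ℝ, ℂ) :=
  lineDerivOpCLM ℝ 𝓢(ℝ × ℝ, ℂ) ((1, 0) : ℝ × ℝ) ^ α.1 *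
    lineDerivOpCLM ℝ 𝓢(ℝ × ℝ, ℂ) ((0, 1) : ℝ × ℝ) ^ α.2

lemma pdr_curry_schwartzMap (Φ : 𝓢(ℝ × ℝ, ℂ)) :
    pdr (curry Φ) = curry (∂_{((1, 0) : ℝ × ℝ)} Φ : 𝓢(ℝ × ℝ, ℂ)) :=
  uncurry_injective (uncurry_pdr (f := curry Φ) Φ.differentiable)

lemma pds_curry_schwartzMap (Φ : 𝓢(ℝ × ℝ, ℂ)) :
    pds (curry Φ) = curry (∂_{((0, 1) : ℝ × ℝ)} Φ : 𝓢(ℝ × ℝ, ℂ)) :=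
  uncurry_injective (uncurry_pds (f := curry Φ) Φ.differentiable)

lemma pdMulti_curry_schwartzMap (α : ℕ × ℕ) (Φ : 𝓢(ℝ × ℝ, ℂ)) :
    pdMulti α (curry Φ) = curry (pdMultiCLM α Φ) := by
  have hr : Semiconj (fun Φ : 𝓢(ℝ × ℝ, ℂ) => curry Φ)
      (lineDerivOpCLM ℝ 𝓢(ℝ × ℝ, ℂ) ((1, 0) : ℝ × ℝ)) pdr :=
    fun Φ => (pdr_curry_schwartzMap Φ).symm
  have hs : Semiconj (fun Φ : 𝓢(ℝ × ℝ, ℂ) => curry Φ)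
      (lineDerivOpCLM ℝ 𝓢(ℝ × ℝ, ℂ) ((0, 1) : ℝ × ℝ)) pds :=
    fun Φ => (pds_curry_schwartzMap Φ).symm
  simpa [pdMulti, pdMultiCLM, FunLike.coe_pow] using
    (((hr.iterate_right α.1).comp_right (hs.iterate_right α.2)).eq Φ).symm

end SchwartzMap

section RapidlyDecreasing

variable {ι : Type*} {w : ι → ℝ}

/-- A family `Φ` in a topological vector space is rapidly decreasing with respect to the weight `w`
if multiplying it by any power of `w` yields a (von Neumann) bounded family. For `w (k, v) = k` and
Schwartz functions `Φ (k, v)` this expresses the decay of a Schwartz–Bruhat function. -/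
def IsRapidlyDecreasing {X : Type*} [AddCommGroup X] [Module ℝ X] [TopologicalSpace X]
    (w : ι → ℝ) (Φ : ι → X) : Prop :=
  ∀ N : ℕ, IsVonNBounded ℝ (range fun i => w i ^ N • Φ i)

namespace IsRapidlyDecreasing

section TopologicalVectorSpace

variable {X Y : Type*} [AddCommGroup X] [Module ℝ X] [TopologicalSpace X]
  [AddCommGroup Y] [Module ℝ Y] [TopologicalSpace Y] {Φ Ψ : ι → X}

lemma map (hΦ : IsRapidlyDecreasing w Φ) (T : X →L[ℝ] Y) :
    IsRapidlyDecreasing w fun i => T (Φ i) := fun N => by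
  simpa only [← range_comp, comp_def, map_smul] using (hΦ N).image T

lemma sub [IsTopologicalAddGroup X] (hΦ : IsRapidlyDecreasing w Φ)
    (hΨ : IsRapidlyDecreasing w Ψ) : IsRapidlyDecreasing w (Φ - Ψ) := fun N => by
  refine ((hΦ N).sub (hΨ N)).subset ?_
  rintro _ ⟨i, rfl⟩
  simpa only [Pi.sub_apply, smul_sub] using sub_mem_sub (mem_range_self i) (mem_range_self i)

end TopologicalVectorSpace

end IsRapidlyDecreasing

lemma isRapidlyDecreasing_schwartzMap_iff {E F : Type*} [NormedAddCommGroup E] [NormedSpace ℝ E]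
    [NormedAddCommGroup F] [NormedSpace ℝ F] {Φ : ι → 𝓢(E, F)} :
    IsRapidlyDecreasing w Φ ↔ ∀ M N n : ℕ, ∃ C : ℝ, ∀ i x,
      |w i| ^ M * (‖x‖ ^ N * ‖iteratedFDeriv ℝ n (Φ i) x‖) ≤ C := by
  have hseminorm (M N n : ℕ) (i : ι) : schwartzSeminormFamily ℝ E F (N, n) (w i ^ M • Φ i) =
      |w i| ^ M * SchwartzMap.seminorm ℝ N n (Φ i) := by
    rw [map_smul_eq_mul, Real.norm_eq_abs, abs_pow, SchwartzMap.schwartzSeminormFamily_apply]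
  simp only [IsRapidlyDecreasing,
    (schwartz_withSeminorms ℝ E F).isVonNBounded_iff_seminorm_bddAbove, Prod.forall,
    ← range_comp, comp_def, hseminorm, bddAbove_def, forall_mem_range]
  refine forall₃_congr fun M N n => ⟨fun ⟨C, hC⟩ => ⟨C, fun i x => ?_⟩,
    fun ⟨C, hC⟩ => ⟨C, fun i => ?_⟩⟩
  · exact (mul_le_mul_of_nonneg_left (SchwartzMap.le_seminorm ℝ N n (Φ i) x)
      (by positivity)).trans (hC i)
  · have hC₀ : 0 ≤ C := le_trans (by positivity) (hC i 0)
    rw [← hseminorm]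
    refine SchwartzMap.seminorm_le_bound ℝ N n _ hC₀ fun x => ?_
    have hsmul : iteratedFDeriv ℝ n (w i ^ M • Φ i : 𝓢(E, F)) x =
        w i ^ M • iteratedFDeriv ℝ n (Φ i) x :=
      iteratedFDeriv_const_smul_apply ((Φ i).smooth n).contDiffAt
    rw [hsmul, norm_smul, norm_pow, Real.norm_eq_abs, mul_left_comm]
    exact hC i x

end RapidlyDecreasing

lemma abs_pow_mul_norm_pow_le_add (a : ℝ) (p : ℝ × ℝ) (M N : ℕ) :
    |a| ^ M * ‖p‖ ^ N ≤ |a| ^ (M + N) + |p.1| ^ (M + N) + |p.2| ^ (M + N) + 1 := by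
  have hmax : max |a| ‖p‖ ^ (M + N) ≤ |a| ^ (M + N) + |p.1| ^ (M + N) + |p.2| ^ (M + N) := by
    have ha : 0 ≤ |a| ^ (M + N) := by positivity
    have h₁ : 0 ≤ |p.1| ^ (M + N) := by positivity
    have h₂ : 0 ≤ |p.2| ^ (M + N) := by positivity
    rw [Prod.norm_def, Real.norm_eq_abs, Real.norm_eq_abs]
    rcases max_choice |a| (max |p.1| |p.2|) with h | h
    · rw [h]; linarith
    · rcases max_choice |p.1| |p.2| with h' | h' <;> rw [h, h'] <;> linarith
  calc |a| ^ M * ‖p‖ ^ N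
      ≤ max |a| ‖p‖ ^ M * max |a| ‖p‖ ^ N := by
        gcongr
        exacts [le_max_left _ _, le_max_right _ _]
    _ = max |a| ‖p‖ ^ (M + N) := (pow_add ..).symm
    _ ≤ _ := by linarith

section SchwartzFamily

variable {ι : Type*} {w : ι → ℝ} {f g : ι → ℝ → ℝ → ℂ}

/-- The decay condition of `IsSchwartzBruhat` for a family of functions of two real variables over
an arbitrary index type, with a weight `w` in the role of the integer variable. -/
def IsSchwartzFamily (w : ι → ℝ) (f : ι → ℝ → ℝ → ℂ) : Prop :=
  (∀ i, ContDiff ℝ ∞ (uncurry (f i))) ∧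
  ∀ (N : ℕ) (α : ℕ × ℕ), ∃ C : ℝ, ∀ (i : ι) (r s : ℝ),
    (|w i| ^ N + |r| ^ N + |s| ^ N + 1) * ‖pdMulti α (f i) r s‖ ≤ C

namespace IsSchwartzFamily

lemma pdr (hf : IsSchwartzFamily w f) : IsSchwartzFamily w fun i => pdr (f i) :=
  ⟨fun i => contDiff_uncurry_pdr (hf.1 i), fun N α => by
    simpa only [pdMulti_pdr (hf.1 _)] using hf.2 N (α.1 + 1, α.2)⟩

lemma pds (hf : IsSchwartzFamily w f) : IsSchwartzFamily w fun i => pds (f i) :=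
  ⟨fun i => contDiff_uncurry_pds (hf.1 i), fun N α => by
    simpa only [pdMulti_pds] using hf.2 N (α.1, α.2 + 1)⟩

lemma exists_pow_mul_norm_iteratedFDeriv_le (hf : IsSchwartzFamily w f) (M N n : ℕ) :
    ∃ C : ℝ, ∀ i p, |w i| ^ M * (‖p‖ ^ N * ‖iteratedFDeriv ℝ n (uncurry (f i)) p‖) ≤ C := by
  induction n generalizing f with
  | zero =>
    obtain ⟨C, hC⟩ := hf.2 (M + N) (0, 0)
    refine ⟨C, fun i p => le_trans ?_ (hC i p.1 p.2)⟩
    rw [norm_iteratedFDeriv_zero, ← mul_assoc]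
    exact mul_le_mul_of_nonneg_right (abs_pow_mul_norm_pow_le_add (w i) p M N) (norm_nonneg _)
  | succ n ih =>
    obtain ⟨C, hC⟩ := ih hf.pdr
    obtain ⟨D, hD⟩ := ih hf.pds
    refine ⟨C + D, fun i p => le_trans ?_ (add_le_add (hC i p) (hD i p))⟩
    have hdiff : Differentiable ℝ (uncurry (f i)) := (hf.1 i).differentiable (by simp)
    rw [uncurry_pdr hdiff, uncurry_pds hdiff, ← mul_add, ← mul_add]
    gcongr
    exact norm_iteratedFDeriv_succ_le_add (contDiff_infty.1 (hf.1 i) (n + 1)) p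

lemma exists_schwartzMap (hf : IsSchwartzFamily w f) :
    ∃ Φ : ι → 𝓢(ℝ × ℝ, ℂ), (∀ i, curry (Φ i) = f i) ∧ IsRapidlyDecreasing w Φ := by
  let Φ (i : ι) : 𝓢(ℝ × ℝ, ℂ) :=
    { toFun := uncurry (f i)
      smooth' := hf.1 i
      decay' := fun N n => by
        obtain ⟨C, hC⟩ := hf.exists_pow_mul_norm_iteratedFDeriv_le 0 N n
        exact ⟨C, fun p => by simpa using hC i p⟩ }
  exact ⟨Φ, fun _ => rfl, isRapidlyDecreasing_schwartzMap_iff.2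
    hf.exists_pow_mul_norm_iteratedFDeriv_le⟩

end IsSchwartzFamily

lemma IsRapidlyDecreasing.exists_add_pow_mul_norm_le {Φ : ι → 𝓢(ℝ × ℝ, ℂ)}
    (hΦ : IsRapidlyDecreasing w Φ) (N : ℕ) :
    ∃ C : ℝ, ∀ i r s, (|w i| ^ N + |r| ^ N + |s| ^ N + 1) * ‖Φ i (r, s)‖ ≤ C := by
  rw [isRapidlyDecreasing_schwartzMap_iff] at hΦ
  obtain ⟨A, hA⟩ := hΦ N 0 0
  obtain ⟨B, hB⟩ := hΦ 0 N 0
  obtain ⟨D, hD⟩ := hΦ 0 0 0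
  simp only [norm_iteratedFDeriv_zero, pow_zero, one_mul] at hA hB hD
  refine ⟨A + B + B + D, fun i r s => ?_⟩
  have hr : |r| ^ N * ‖Φ i (r, s)‖ ≤ B :=
    le_trans (by gcongr; exact norm_fst_le (r, s)) (hB i (r, s))
  have hs : |s| ^ N * ‖Φ i (r, s)‖ ≤ B :=
    le_trans (by gcongr; exact norm_snd_le (r, s)) (hB i (r, s))
  linarith [hA i (r, s), hD i (r, s)]

lemma IsRapidlyDecreasing.isSchwartzFamily {Φ : ι → 𝓢(ℝ × ℝ, ℂ)}
    (hΦ : IsRapidlyDecreasing w Φ) : IsSchwartzFamily w fun i => curry (Φ i) := by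
  refine ⟨fun i => (Φ i).smooth ⊤, fun N α => ?_⟩
  simpa only [pdMulti_curry_schwartzMap, curry] using
    (hΦ.map (pdMultiCLM α)).exists_add_pow_mul_norm_le N

namespace IsSchwartzFamily

lemma sub (hf : IsSchwartzFamily w f) (hg : IsSchwartzFamily w g) :
    IsSchwartzFamily w fun i r s => f i r s - g i r s := by
  obtain ⟨Φ, hΦf, hΦ⟩ := hf.exists_schwartzMap
  obtain ⟨Ψ, hΨg, hΨ⟩ := hg.exists_schwartzMap
  simp only [← hΦf, ← hΨg]
  exact (hΦ.sub hΨ).isSchwartzFamily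

lemma temperate_mul {m : ℝ × ℝ → ℂ} (hm : m.HasTemperateGrowth) (hf : IsSchwartzFamily w f) :
    IsSchwartzFamily w fun i r s => m (r, s) * f i r s := by
  obtain ⟨Φ, hΦf, hΦ⟩ := hf.exists_schwartzMap
  have hmap := (hΦ.map ((SchwartzMap.smulLeftCLM ℂ m).restrictScalars ℝ)).isSchwartzFamily
  simp only [ContinuousLinearMap.coe_restrictScalars', SchwartzMap.smulLeftCLM_apply hm,
    smul_eq_mul] at hmap
  simp only [← hΦf]
  exact hmap

end IsSchwartzFamily

end SchwartzFamily

section SchwartzBruhat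

variable {F G : ℤ → Torus → ℝ → ℝ → ℂ}

lemma isSchwartzBruhat_iff :
    IsSchwartzBruhat F ↔
      (∀ k, Continuous fun p : Torus × ℝ × ℝ => F k p.1 p.2.1 p.2.2) ∧
        IsSchwartzFamily (fun i : ℤ × Torus => (i.1 : ℝ)) fun i => F i.1 i.2 := by
  simp only [IsSchwartzBruhat, IsSchwartzFamily, Prod.forall]
  rfl

namespace IsSchwartzBruhat

lemma sub (hF : IsSchwartzBruhat F) (hG : IsSchwartzBruhat G) :
    IsSchwartzBruhat fun k v r s => F k v r s - G k v r s := by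
  rw [isSchwartzBruhat_iff] at hF hG ⊢
  exact ⟨fun k => (hF.1 k).sub (hG.1 k), hF.2.sub hG.2⟩

lemma temperate_mul {m : ℝ × ℝ → ℂ} (hm : m.HasTemperateGrowth) (hF : IsSchwartzBruhat F) :
    IsSchwartzBruhat fun k v r s => m (r, s) * F k v r s := by
  rw [isSchwartzBruhat_iff] at hF ⊢
  exact ⟨fun k => (hm.1.continuous.comp continuous_snd).mul (hF.1 k), hF.2.temperate_mul hm⟩

end IsSchwartzBruhat

end SchwartzBruhat

section Resolvent

@[fun_prop]
lemma hasTemperateGrowth_fst {E F : Type*} [NormedAddCommGroup E] [NormedSpace ℝ E]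
    [NormedAddCommGroup F] [NormedSpace ℝ F] : HasTemperateGrowth fun p : E × F => p.1 :=
  (ContinuousLinearMap.fst ℝ E F).hasTemperateGrowth

@[fun_prop]
lemma hasTemperateGrowth_snd {E F : Type*} [NormedAddCommGroup E] [NormedSpace ℝ E]
    [NormedAddCommGroup F] [NormedSpace ℝ F] : HasTemperateGrowth fun p : E × F => p.2 :=
  (ContinuousLinearMap.snd ℝ E F).hasTemperateGrowth

lemma one_add_sq_add_sq_eq_norm (p : ℝ × ℝ) :
    (1 : ℂ) + (p.2 : ℂ) ^ 2 + (p.1 : ℂ) ^ 2 =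
      ((1 + ‖Complex.equivRealProdCLM.symm p‖ ^ 2 : ℝ) : ℂ) := by
  rw [← Complex.normSq_eq_norm_sq, Complex.normSq_apply]
  simp only [Complex.equivRealProdCLM_symm_apply_re, Complex.equivRealProdCLM_symm_apply_im,
    Complex.ofReal_add, Complex.ofReal_one, Complex.ofReal_mul]
  ring

lemma hasTemperateGrowth_inv_one_add_sq_add_sq :
    (fun p : ℝ × ℝ => ((1 : ℂ) + (p.2 : ℂ) ^ 2 + (p.1 : ℂ) ^ 2)⁻¹).HasTemperateGrowth := by
  have h := Complex.hasTemperateGrowth_ofReal.comp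
    ((hasTemperateGrowth_one_add_norm_sq_rpow ℂ (-1)).comp
      Complex.equivRealProdCLM.symm.hasTemperateGrowth)
  simpa only [one_add_sq_add_sq_eq_norm, ← Complex.ofReal_inv, ← Real.rpow_neg_one,
    comp_def] using h

lemma IsSchwartzBruhat.div_one_add_sq_add_sq {F : ℤ → Torus → ℝ → ℝ → ℂ}
    (hF : IsSchwartzBruhat F) :
    IsSchwartzBruhat fun k v r s => F k v r s / ((1 : ℂ) + (s : ℂ) ^ 2 + (r : ℂ) ^ 2) := by
  simpa only [div_eq_inv_mul] using hF.temperate_mul hasTemperateGrowth_inv_one_add_sq_add_sq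

lemma mul_div_add_mul_div_eq {K : Type*} [Field K] {a b c d : K} (hd : d ≠ 0)
    (h : a * b - c ^ 2 = d) (x y : K) :
    a * ((b * x - c * y) / d) + c * ((a * y - c * x) / d) = x := by
  field_simp
  linear_combination x * h

end Resolvent

/-!
STATEMENT 15: Surjectivity of d_𝓡 ± i on 𝒮₂⊕𝒮₂: for ψ₁, ψ₂ ∈ 𝒮₂ the explicit
functions φ₁, φ₂ lie in 𝒮₂ and satisfy (r+is)φ₂ + εiφ₁ = ψ₁ and
(r−is)φ₁ + εiφ₂ = ψ₂.
-/

theorem stmt15 (ε : ℝ) (hε : ε = 1 ∨ ε = -1)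
    (ψ₁ ψ₂ : ℤ → Torus → ℝ → ℝ → ℂ)
    (hψ₁ : IsSchwartzBruhat ψ₁) (hψ₂ : IsSchwartzBruhat ψ₂)
    (φ₁ φ₂ : ℤ → Torus → ℝ → ℝ → ℂ)
    (hφ₁ : φ₁ = fun k x (r : ℝ) (s : ℝ) =>
      (((r : ℂ) + Complex.I * (s : ℂ)) * ψ₂ k x r s
          - (ε : ℂ) * Complex.I * ψ₁ k x r s) /
        ((1 : ℂ) + (s : ℂ) ^ 2 + (r : ℂ) ^ 2))
    (hφ₂ : φ₂ = fun k x (r : ℝ) (s : ℝ) =>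
      (((r : ℂ) - Complex.I * (s : ℂ)) * ψ₁ k x r s
          - (ε : ℂ) * Complex.I * ψ₂ k x r s) /
        ((1 : ℂ) + (s : ℂ) ^ 2 + (r : ℂ) ^ 2)) :
    -- φ₁, φ₂ are Schwartz–Bruhat
    IsSchwartzBruhat φ₁ ∧ IsSchwartzBruhat φ₂ ∧
    -- (d_𝓡 + εi)(φ₁,φ₂) = (ψ₁,ψ₂)
    (∀ (k : ℤ) (x : Torus) (r s : ℝ),
      ((r : ℂ) + Complex.I * (s : ℂ)) * φ₂ k x r s
          + (ε : ℂ) * Complex.I * φ₁ k x r s = ψ₁ k x r s) ∧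
    (∀ (k : ℤ) (x : Torus) (r s : ℝ),
      ((r : ℂ) - Complex.I * (s : ℂ)) * φ₁ k x r s
          + (ε : ℂ) * Complex.I * φ₂ k x r s = ψ₂ k x r s) := by
  have hadd : Function.HasTemperateGrowth fun p : ℝ × ℝ => (p.1 : ℂ) + Complex.I * (p.2 : ℂ) := by
    fun_prop
  have hsub : Function.HasTemperateGrowth fun p : ℝ × ℝ => (p.1 : ℂ) - Complex.I * (p.2 : ℂ) := by
    fun_prop
  have hconst := Function.HasTemperateGrowth.const (E := ℝ × ℝ) ((ε : ℂ) * Complex.I)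
  have hdet (r s : ℝ) : ((r : ℂ) + Complex.I * s) * ((r : ℂ) - Complex.I * s) -
      ((ε : ℂ) * Complex.I) ^ 2 = 1 + (s : ℂ) ^ 2 + (r : ℂ) ^ 2 := by
    have hε_sq : (ε : ℂ) ^ 2 = 1 := by rcases hε with rfl | rfl <;> simp
    linear_combination (-(s : ℂ) ^ 2 - (ε : ℂ) ^ 2) * Complex.I_sq + hε_sq
  have hne (r s : ℝ) : (1 : ℂ) + (s : ℂ) ^ 2 + (r : ℂ) ^ 2 ≠ 0 := by
    exact_mod_cast (by positivity : (1 : ℝ) + s ^ 2 + r ^ 2 ≠ 0)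
  subst hφ₁ hφ₂
  refine ⟨((hψ₂.temperate_mul hadd).sub (hψ₁.temperate_mul hconst)).div_one_add_sq_add_sq,
    ((hψ₁.temperate_mul hsub).sub (hψ₂.temperate_mul hconst)).div_one_add_sq_add_sq,
    fun k x r s => mul_div_add_mul_div_eq (hne r s) (hdet r s) _ _,
    fun k x r s => mul_div_add_mul_div_eq (hne r s) ?_ _ _⟩
  rw [mul_comm, hdet]

end
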